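/- Let P be a finite poset, (S_*(P), δ_*, φ) a synor complex for P, x ∈ P, γ ∈ S_i(P)^{(x)} a principal synor chain, and 0 ≤ ℓ ≤ i. Then φ(γ) = Σ_{χ ∈ X_ℓ^γ} χ*φ(ζ_χ), where each ζ_χ is a cycle in ⊕_{y < min(χ)} S_{i−ℓ−1}(P)^{(y)}. -/

import Mathlib

open Finsupp

noncomputable section

variable (K : Type) [Field K]

section Core
variable (P : Type) [Preorder P]

/-- Order chains with `n` elements of the poset `P`, written as strictly
decreasing tuples `(x₀ > x₁ > ⋯ > x_{n-1})`. -/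
def OChain (n : ℕ) : Type := {c : Fin n → P // StrictAnti c}

/-- The chain group in "level" `n`: the `K`-vector space with basis the order chains with
`n` elements.  Level `n` corresponds to homological degree `n - 1`; in particular
`CGrp K P 0 ≅ K` is the reduced part `C̃₋₁`. -/
abbrev CGrp (n : ℕ) : Type := OChain P n →₀ K

/-- Deletion of the `k`-th entry of an order chain. -/
def odel {n : ℕ} (k : Fin (n + 1)) (c : OChain P (n + 1)) : OChain P n :=
  ⟨c.1 ∘ k.succAbove, c.2.comp_strictMono (Fin.strictMono_succAbove k)⟩

/-- The simplicial boundary map (of the reduced simplicial chain complex of the order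
complex), from level `n+1` to level `n`. -/
def cbdry (n : ℕ) : CGrp K P (n + 1) →ₗ[K] CGrp K P n :=
  Finsupp.lsum K fun c => ∑ k : Fin (n + 1), ((-1 : K) ^ (k : ℕ)) • Finsupp.lsingle (odel P k c)

/-- The cycles in level `n` (every level-0 chain, i.e. multiple of the empty chain,
is a cycle). -/
def cyclesAt : (n : ℕ) → Submodule K (CGrp K P n)
  | 0 => ⊤
  | (n + 1) => LinearMap.ker (cbdry K P n)

/-- The boundaries in level `n`. -/
def boundariesIn (n : ℕ) : Submodule K (CGrp K P n) :=
  LinearMap.range (cbdry K P n)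

/-- `H̃_{n-1}(P) ≠ 0`: nontriviality of the reduced simplicial homology (with coefficients
in `K`) of the order complex of `P` in degree `n - 1` (level `n`). -/
def RHomNontrivial (n : ℕ) : Prop := ¬ cyclesAt K P n ≤ boundariesIn K P n

/-- The subspace of chains all of whose elements lie in the subset `J ⊆ P`
(the chain group of the subposet `J`). -/
def chainsIn (J : Set P) (n : ℕ) : Submodule K (CGrp K P n) :=
  Finsupp.supported K K {c : OChain P n | ∀ r, c.1 r ∈ J}

/-- Transport of chain groups along an equality of levels. -/
def castCGrp {a b : ℕ} (h : a = b) : CGrp K P a ≃ₗ[K] CGrp K P b :=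
  Finsupp.domLCongr (Equiv.cast (congrArg (OChain P) h))

end Core


section Synor
variable (P : Type) [PartialOrder P]

/-- For a family `S` of graded pieces (with `S n x` the piece of homological degree `n`,
i.e. level `n+1`, sitting over `x ∈ P`) and a subset `J ⊆ P`, the part of the complex
lying over `J`: at level `0` it is all of `C̃₋₁ = K`, and at level `n+1` it is
`⊕_{x ∈ J} S_n^{(x)}`. -/
def idealPart (S : (n : ℕ) → P → Submodule K (CGrp K P (n + 1))) (J : Set P) :
    (nn : ℕ) → Submodule K (CGrp K P nn)
  | 0 => ⊤
  | (n + 1) => ⨆ x ∈ J, S n x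

/-- A synor complex for the finite poset `P`: a strictly `P`-graded subcomplex
`S_*(P) ⊆ C̃_*(P)` of the reduced simplicial chain complex of the order complex of `P`
(we identify the injective `P`-graded chain map `φ` with the inclusion of its image) with:
`S_i(P) = ⊕_{x ∈ P} S_i(P)^{(x)}` with `S_i(P)^{(x)}` contained in the span of the order
chains with largest element `x` (`graded`); `∂(S_i(P)^{(x)}) ⊆ ⊕_{y<x} S_{i-1}(P)^{(y)}`
(`strict`; for degree `0` the boundary lands in `C̃₋₁ = K` automatically); (S1)
`dim_K S_i(P)^{(x)} = dim_K H̃_{i-1}(P_{<x})` (`dim_eq`, the dimension of the reduced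
homology being the dimension of the cycles minus the dimension of the boundaries); and
(S2) for every order ideal `J ⊆ P` the inclusion `S_*(P)^J ⊆ C̃_*(J)` induces an
isomorphism on homology (`quasiIso`: surjectivity and injectivity of the induced map). -/
structure SynorComplex : Type where
  S : (n : ℕ) → P → Submodule K (CGrp K P (n + 1))
  graded : ∀ (n : ℕ) (x : P),
    S n x ≤ Finsupp.supported K K {c : OChain P (n + 1) | c.1 0 = x}
  strict : ∀ (n : ℕ) (x : P), ∀ f ∈ S (n + 1) x,
    cbdry K P (n + 1) f ∈ ⨆ y ∈ Set.Iio x, S n y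
  dim_eq : ∀ (n : ℕ) (x : P),
    Module.finrank K ↥(S n x) =
      Module.finrank K ↥(cyclesAt K {y : P // y < x} n) -
        Module.finrank K ↥(boundariesIn K {y : P // y < x} n)
  quasiIso : ∀ J : Set P, IsLowerSet J → ∀ nn : ℕ,
    (∀ z ∈ cyclesAt K P nn ⊓ chainsIn K P J nn,
        ∃ a ∈ cyclesAt K P nn ⊓ idealPart K P S J nn,
          z - a ∈ Submodule.map (cbdry K P nn) (chainsIn K P J (nn + 1))) ∧
    (∀ a ∈ idealPart K P S J nn,
        a ∈ Submodule.map (cbdry K P nn) (chainsIn K P J (nn + 1)) →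
        a ∈ Submodule.map (cbdry K P nn) (idealPart K P S J (nn + 1)))

end Synor

section Repr
variable (P : Type) [PartialOrder P]

/-- Concatenation `χ * c` of two order chains, valid when every entry of `c` is strictly
below every entry of `χ`. -/
def concatOC {a b : ℕ} (χ : OChain P a) (c : OChain P b)
    (h : ∀ (s : Fin b) (r : Fin a), c.1 s < χ.1 r) : OChain P (a + b) :=
  ⟨fun r => if hr : (r : ℕ) < a then χ.1 ⟨r, hr⟩
            else c.1 ⟨(r : ℕ) - a, by have := r.2; omega⟩, by
    intro p q hpq
    dsimp only
    rcases lt_or_ge (q : ℕ) a with hq | hq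
    · have hp : (p : ℕ) < a := by have := Fin.lt_def.mp hpq; omega
      rw [dif_pos hp, dif_pos hq]
      exact χ.2 (Fin.mk_lt_mk.mpr (Fin.lt_def.mp hpq))
    · rw [dif_neg (not_lt.mpr hq)]
      rcases lt_or_ge (p : ℕ) a with hp | hp
      · rw [dif_pos hp]
        exact h _ _
      · rw [dif_neg (not_lt.mpr hp)]
        exact c.2 (Fin.mk_lt_mk.mpr (by have := Fin.lt_def.mp hpq; omega))⟩

open Classical in
/-- The linear map `χ * (-)` prepending the order chain `χ` to every order chain of a
chain (declared as `0` on the basis chains that are not entirely below `χ`). -/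
def prependC {a b : ℕ} (χ : OChain P a) : CGrp K P b →ₗ[K] CGrp K P (a + b) :=
  Finsupp.lsum K fun c =>
    if h : ∀ (s : Fin b) (r : Fin a), c.1 s < χ.1 r then
      Finsupp.lsingle (concatOC P χ c h)
    else 0

/-- `X_ℓ^γ` (for `s = ℓ + 1`): the set of order chains with `s` elements occurring as
initial segments of order chains in the support of `γ`. -/
def initSegs {m : ℕ} (γ : CGrp K P (m + 1)) (s : ℕ) (h : s ≤ m + 1) :
    Set (OChain P s) :=
  {χ | ∃ c ∈ γ.support, ∀ r : Fin s, c.1 (Fin.castLE h r) = χ.1 r}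

end Repr

section Link
variable {P : Type} [PartialOrder P]

/-- The initial segment with `a` elements of an order chain. -/
def initSeg {a N : ℕ} (h : a ≤ N) (d : OChain P N) : OChain P a :=
  ⟨fun r => d.1 (Fin.castLE h r), fun _ _ hpq => d.2 hpq⟩

/-- The order chain that remains after removing the initial segment with `a` elements. -/
def finSeg {a b N : ℕ} (h : a + b = N) (d : OChain P N) : OChain P b :=
  ⟨fun s => d.1 ⟨a + s, by omega⟩, fun p q hpq => d.2 (by
    simp only [Fin.lt_def] at hpq ⊢
    omega)⟩

open Classical in
/-- The coefficient of `χ * (-)` in a chain: the linear map sending an order chain to what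
remains after its initial segment, if that segment is `χ`, and to `0` otherwise. -/
def linkC {a b N : ℕ} (h : a + b = N) (χ : OChain P a) : CGrp K P N →ₗ[K] CGrp K P b :=
  Finsupp.lsum K fun d =>
    if initSeg (by omega : a ≤ N) d = χ then Finsupp.lsingle (finSeg h d) else 0

/-- The order chain with the single element `y`. -/
def pointOC (y : P) : OChain P 1 :=
  ⟨fun _ => y, fun p q hpq => absurd hpq (by simp [Subsingleton.elim p q])⟩

variable {K}

theorem linkC_single_of_eq {a b N : ℕ} (h : a + b = N) {χ : OChain P a} {d : OChain P N}
    (hd : initSeg (by omega : a ≤ N) d = χ) (k : K) :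
    linkC K h χ (single d k) = single (finSeg h d) k := by
  simp [linkC, hd]

theorem linkC_single_of_ne {a b N : ℕ} (h : a + b = N) {χ : OChain P a} {d : OChain P N}
    (hd : initSeg (by omega : a ≤ N) d ≠ χ) (k : K) :
    linkC K h χ (single d k) = 0 := by
  simp [linkC, hd]

theorem linkC_eq_zero {a b N : ℕ} (h : a + b = N) {χ : OChain P a} {f : CGrp K P N}
    (hf : ∀ d ∈ f.support, initSeg (by omega : a ≤ N) d ≠ χ) : linkC K h χ f = 0 := by
  rw [linkC, Finsupp.lsum_apply]
  exact Finset.sum_eq_zero fun d hd => by simp [hf d hd]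

theorem initSeg_eq_pointOC_iff {N : ℕ} (h : 1 ≤ N + 1) {d : OChain P (N + 1)} {y : P} :
    initSeg h d = pointOC y ↔ d.1 0 = y := by
  constructor
  · intro hd
    exact congrFun (congrArg Subtype.val hd) 0
  · intro hd
    refine Subtype.ext (funext fun r => ?_)
    rw [Subsingleton.elim r 0]
    exact hd

theorem cbdry_single (n : ℕ) (d : OChain P (n + 1)) (k : K) :
    cbdry K P n (single d k) =
      ∑ j : Fin (n + 1), ((-1 : K) ^ (j : ℕ)) • single (odel P j d) k := by
  simp [cbdry]

/-- Taking the coefficient of `χ * (-)` can be done in two steps, removing the last element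
of `χ` at the end. -/
theorem linkC_comp_pointOC {a b N : ℕ} (h : a + 1 + b = N) (χ : OChain P (a + 1))
    (f : CGrp K P N) :
    linkC K h χ f = linkC K (by omega : 1 + b = b + 1) (pointOC (χ.1 (Fin.last a)))
      (linkC K (by omega : a + (b + 1) = N) (initSeg (Nat.le_succ a) χ) f) := by
  induction f using Finsupp.induction_linear with
  | zero => simp
  | add f g hf hg => simp only [map_add, hf, hg]
  | single d k =>
    by_cases h₁ : initSeg (by omega : a ≤ N) d = initSeg (Nat.le_succ a) χ
    · rw [linkC_single_of_eq _ h₁]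
      by_cases h₂ : (finSeg (by omega : a + (b + 1) = N) d).1 0 = χ.1 (Fin.last a)
      · rw [linkC_single_of_eq _ ((initSeg_eq_pointOC_iff _).2 h₂), linkC_single_of_eq]
        · congr 1
          refine Subtype.ext (funext fun s => congrArg d.1 (Fin.ext ?_))
          simp only
          omega
        · refine Subtype.ext (funext fun r => ?_)
          induction r using Fin.lastCases with
          | last => exact h₂
          | cast r => exact congrFun (congrArg Subtype.val h₁) r
      · rw [linkC_single_of_ne _ (mt (initSeg_eq_pointOC_iff _).1 h₂), linkC_single_of_ne]
        rintro rfl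
        exact h₂ rfl
    · rw [linkC_single_of_ne _ h₁, map_zero, linkC_single_of_ne]
      rintro rfl
      exact h₁ rfl

/-- Chains with largest element `y`. -/
abbrev toppedBy (K : Type) [Field K] (y : P) (n : ℕ) : Submodule K (CGrp K P (n + 1)) :=
  Finsupp.supported K K {c : OChain P (n + 1) | c.1 0 = y}

@[elab_as_elim]
theorem toppedBy_induction {y : P} {n : ℕ} {p : CGrp K P (n + 1) → Prop}
    (hzero : p 0) (hadd : ∀ f g, p f → p g → p (f + g))
    (hsingle : ∀ (d : OChain P (n + 1)) (k : K), d.1 0 = y → p (single d k))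
    {f : CGrp K P (n + 1)} (hf : f ∈ toppedBy K y n) : p f := by
  rw [← Finsupp.sum_single f]
  exact Finset.sum_induction _ p hadd hzero fun d hd => hsingle d _ (hf hd)

theorem odel_zero_eq_finSeg {n : ℕ} (d : OChain P (n + 1)) :
    odel P 0 d = finSeg (by omega : 1 + n = n + 1) d :=
  Subtype.ext (funext fun s => congrArg d.1 (Fin.ext (by simp [add_comm])))

theorem odel_succ_apply_zero {n : ℕ} (j : Fin (n + 1)) (d : OChain P (n + 2)) :
    (odel P j.succ d).1 0 = d.1 0 :=
  congrArg d.1 (Fin.succ_succAbove_zero j)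

theorem finSeg_odel_succ {n : ℕ} (j : Fin (n + 1)) (d : OChain P (n + 2)) :
    finSeg (by omega : 1 + n = n + 1) (odel P j.succ d) =
      odel P j (finSeg (by omega : 1 + (n + 1) = n + 2) d) := by
  refine Subtype.ext (funext fun s => congrArg d.1 ?_)
  have hs : (⟨1 + s, by omega⟩ : Fin (n + 1)) = s.succ := Fin.ext (by simp [add_comm])
  rw [hs, Fin.succ_succAbove_succ]
  exact Fin.ext (by simp [add_comm])

/-- The boundary of `y * ζ` differs from `ζ` by chains with largest element `y`. -/
theorem cbdry_sub_linkC_mem {y : P} {n : ℕ} {f : CGrp K P (n + 2)}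
    (hf : f ∈ toppedBy K y (n + 1)) :
    cbdry K P (n + 1) f - linkC K (by omega) (pointOC y) f ∈ toppedBy K y n := by
  refine toppedBy_induction ?_ (fun f g hf hg => ?_) (fun d k hd => ?_) hf
  · simp
  · rw [map_add, map_add, add_sub_add_comm]
    exact add_mem hf hg
  · rw [cbdry_single, linkC_single_of_eq _ ((initSeg_eq_pointOC_iff _).2 hd), Fin.sum_univ_succ,
      odel_zero_eq_finSeg, Fin.val_zero, pow_zero, one_smul, add_sub_cancel_left]
    exact sum_mem fun j _ => Submodule.smul_mem _ _ <|
      Finsupp.single_mem_supported K k ((odel_succ_apply_zero j d).trans hd)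

/-- The boundary of `y * ζ` is `ζ - y * ∂ζ`; this compares the terms starting with `y`. -/
theorem linkC_cbdry {y : P} {n : ℕ} {f : CGrp K P (n + 2)} (hf : f ∈ toppedBy K y (n + 1)) :
    linkC K (by omega : 1 + n = n + 1) (pointOC y) (cbdry K P (n + 1) f) =
      -cbdry K P n (linkC K (by omega) (pointOC y) f) := by
  refine toppedBy_induction ?_ (fun f g hf hg => ?_) (fun d k hd => ?_) hf
  · simp
  · simp only [map_add, hf, hg, neg_add]
  · have h₀ : (odel P 0 d).1 0 ≠ y := hd ▸ (d.2 (Fin.succ_pos 0)).ne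
    rw [cbdry_single, linkC_single_of_eq _ ((initSeg_eq_pointOC_iff _).2 hd), Fin.sum_univ_succ,
      map_add, map_smul, linkC_single_of_ne _ (mt (initSeg_eq_pointOC_iff _).1 h₀), smul_zero,
      zero_add, map_sum, cbdry_single, ← Finset.sum_neg_distrib]
    refine Finset.sum_congr rfl fun j _ => ?_
    rw [map_smul, linkC_single_of_eq _
      ((initSeg_eq_pointOC_iff _).2 ((odel_succ_apply_zero j d).trans hd)), finSeg_odel_succ,
      Fin.val_succ, pow_succ, mul_neg_one, neg_smul]

theorem linkC_pointOC_mem_supported {y : P} {n : ℕ} {f : CGrp K P (n + 2)}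
    (hf : f ∈ toppedBy K y (n + 1)) :
    linkC K (by omega : 1 + (n + 1) = n + 2) (pointOC y) f ∈
      Finsupp.supported K K {c : OChain P (n + 1) | c.1 0 < y} := by
  refine toppedBy_induction ?_ (fun f g hf hg => ?_) (fun d k hd => ?_) hf
  · simp
  · rw [map_add]
    exact add_mem hf hg
  · rw [linkC_single_of_eq _ ((initSeg_eq_pointOC_iff _).2 hd)]
    exact Finsupp.single_mem_supported K k (hd ▸ d.2 (Fin.succ_pos 0))

namespace SynorComplex
variable (σ : SynorComplex K P)

theorem idealPart_Iio_le_supported (y : P) (n : ℕ) :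
    idealPart K P σ.S (Set.Iio y) (n + 1) ≤
      Finsupp.supported K K {c : OChain P (n + 1) | c.1 0 < y} :=
  iSup₂_le fun z hz => (σ.graded n z).trans <|
    Finsupp.supported_mono fun _ hc => (show _ = z from hc).trans_lt hz

/-- A principal synor chain over `y` is `y * ζ`, where `ζ` is its boundary. -/
theorem linkC_pointOC_eq_cbdry {y : P} {n : ℕ} {f : CGrp K P (n + 2)} (hf : f ∈ σ.S (n + 1) y) :
    linkC K (by omega) (pointOC y) f = cbdry K P (n + 1) f := by
  have hf' := σ.graded _ _ hf
  have hlt := sub_mem (σ.idealPart_Iio_le_supported y n (σ.strict n y f hf))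
    (linkC_pointOC_mem_supported hf')
  have hdisj : Disjoint {c : OChain P (n + 1) | c.1 0 < y} {c | c.1 0 = y} :=
    Set.disjoint_left.2 fun _ hc => hc.ne
  exact (sub_eq_zero.1 <| Submodule.disjoint_def.1
    (Finsupp.disjoint_supported_supported hdisj) _ hlt (cbdry_sub_linkC_mem hf')).symm

theorem linkC_pointOC_mem_of_mem {y : P} {n : ℕ} {f : CGrp K P (n + 1)} (hf : f ∈ σ.S n y) :
    linkC K (by omega) (pointOC y) f ∈
      cyclesAt K P n ⊓ idealPart K P σ.S (Set.Iio y) n := by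
  cases n with
  | zero => exact ⟨trivial, trivial⟩
  | succ n =>
    have hf' := σ.graded _ _ hf
    have hmem := σ.strict n y f hf
    refine ⟨?_, by rw [σ.linkC_pointOC_eq_cbdry hf]; exact hmem⟩
    change cbdry K P n _ = 0
    rw [← neg_eq_zero, ← linkC_cbdry hf']
    refine linkC_eq_zero _ fun d hd => ?_
    rw [Ne, initSeg_eq_pointOC_iff]
    exact ne_of_lt (σ.idealPart_Iio_le_supported y n hmem hd)

theorem linkC_pointOC_mem (J : Set P) (y : P) {n : ℕ} {f : CGrp K P (n + 1)}
    (hf : f ∈ idealPart K P σ.S J (n + 1)) :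
    linkC K (by omega) (pointOC y) f ∈
      cyclesAt K P n ⊓ idealPart K P σ.S (Set.Iio y) n := by
  suffices h : idealPart K P σ.S J (n + 1) ≤ (cyclesAt K P n ⊓
      idealPart K P σ.S (Set.Iio y) n).comap (linkC K (by omega) (pointOC y)) from h hf
  refine iSup₂_le fun z _ g hg => ?_
  by_cases hzy : z = y
  · subst hzy
    exact σ.linkC_pointOC_mem_of_mem hg
  · rw [Submodule.mem_comap, linkC_eq_zero]
    · exact zero_mem _
    · intro d hd
      rw [Ne, initSeg_eq_pointOC_iff, show d.1 0 = z from σ.graded n z hg hd]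
      exact hzy

theorem linkC_mem (J : Set P) {ℓ n N : ℕ} (h : ℓ + 1 + n = N + 1) (χ : OChain P (ℓ + 1))
    {f : CGrp K P (N + 1)} (hf : f ∈ idealPart K P σ.S J (N + 1)) :
    linkC K h χ f ∈
      cyclesAt K P n ⊓ idealPart K P σ.S (Set.Iio (χ.1 (Fin.last ℓ))) n := by
  induction ℓ generalizing n with
  | zero =>
    obtain rfl : n = N := by omega
    have hχ : χ = pointOC (χ.1 (Fin.last 0)) :=
      Subtype.ext (funext fun r => congrArg χ.1 (Fin.ext (by omega)))
    have hlink := σ.linkC_pointOC_mem J (χ.1 (Fin.last 0)) hf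
    rwa [← hχ] at hlink
  | succ ℓ ih =>
    rw [linkC_comp_pointOC]
    exact σ.linkC_pointOC_mem _ _ (ih (by omega) (initSeg (Nat.le_succ _) χ)).2

end SynorComplex

theorem castCGrp_single {a b : ℕ} (h : a = b) (c : OChain P a) (k : K) :
    castCGrp K P h (single c k) = single (cast (congrArg (OChain P) h) c) k := by
  simp [castCGrp]

theorem castCGrp_prependC_finSeg {a b N : ℕ} (h : a + b = N) (d : OChain P N) (k : K) :
    castCGrp K P h (prependC K P (initSeg (by omega : a ≤ N) d) (single (finSeg h d) k)) =
      single d k := by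
  subst h
  have hlt : ∀ (s : Fin b) (r : Fin a), (finSeg rfl d).1 s <
      (initSeg (by omega : a ≤ a + b) d).1 r := fun s r => d.2 (by
    simp only [Fin.lt_def, Fin.val_castLE]
    omega)
  rw [prependC, Finsupp.lsum_single, dif_pos hlt, Finsupp.lsingle_apply, castCGrp_single, cast_eq]
  congr 1
  refine Subtype.ext (funext fun r => ?_)
  simp only [concatOC, initSeg, finSeg]
  split_ifs with hr
  · rfl
  · exact congrArg d.1 (Fin.ext (by simp only; omega))

instance [Finite P] (n : ℕ) : Finite (OChain P n) :=
  inferInstanceAs (Finite {c : Fin n → P // StrictAnti c})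

theorem eq_sum_prependC_linkC {a b N : ℕ} [Fintype (OChain P a)] (h : a + b = N)
    (f : CGrp K P N) :
    f = ∑ χ : OChain P a, castCGrp K P h (prependC K P χ (linkC K h χ f)) := by
  induction f using Finsupp.induction_linear with
  | zero => simp
  | add f g hf hg =>
    simp only [map_add, Finset.sum_add_distrib]
    rw [← hf, ← hg]
  | single d k =>
    rw [Finset.sum_eq_single (initSeg (by omega : a ≤ N) d)]
    · rw [linkC_single_of_eq _ rfl, castCGrp_prependC_finSeg]
    · intro χ _ hχ
      rw [linkC_single_of_ne _ hχ.symm, map_zero, map_zero]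
    · exact fun hd => absurd (Finset.mem_univ _) hd

end Link

/-- **`ℓ`-representations.**  Let `P` be a finite poset,
`S_*(P) ⊆ C̃_*(P)` a synor complex (identified with the image of `φ`), `x ∈ P`,
`γ ∈ S_m(P)^{(x)}` a principal synor chain, and `0 ≤ ℓ ≤ m`.  Then
`γ = Σ_{χ ∈ X_ℓ^γ} χ * ζ_χ`, where each `ζ_χ` is a cycle in
`⊕_{y < min(χ)} S_{m-ℓ-1}(P)^{(y)}`. -/
theorem ell_representation (P : Type) [PartialOrder P] [Fintype P]
    (σ : SynorComplex K P) (m ℓ : ℕ) (hℓ : ℓ ≤ m) (x : P)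
    (γ : CGrp K P (m + 1)) (hγ : γ ∈ σ.S m x) :
    ∃ ζ : OChain P (ℓ + 1) → CGrp K P (m - ℓ),
      (∀ χ : OChain P (ℓ + 1),
        ζ χ ∈ cyclesAt K P (m - ℓ) ⊓
          idealPart K P σ.S (Set.Iio (χ.1 (Fin.last ℓ))) (m - ℓ)) ∧
      (∀ χ ∉ initSegs K P γ (ℓ + 1) (by omega), ζ χ = 0) ∧
      γ = ∑ᶠ χ ∈ initSegs K P γ (ℓ + 1) (by omega),
        castCGrp K P (by omega) (prependC K P χ (ζ χ)) := by
  have hlen : ℓ + 1 + (m - ℓ) = m + 1 := by omega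
  have hzero : ∀ χ ∉ initSegs K P γ (ℓ + 1) (by omega), linkC K hlen χ γ = 0 :=
    fun χ hχ => linkC_eq_zero _ fun d hd hdχ =>
      hχ ⟨d, hd, fun r => congrFun (congrArg Subtype.val hdχ) r⟩
  refine ⟨fun χ => linkC K hlen χ γ, fun χ => σ.linkC_mem {x} hlen χ ?_, hzero, ?_⟩
  · exact Submodule.mem_iSup_of_mem x (Submodule.mem_iSup_of_mem rfl hγ)
  · have := Fintype.ofFinite (OChain P (ℓ + 1))
    rw [finsum_mem_def, Set.indicator_eq_self.2, finsum_eq_sum_of_fintype]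
    · exact eq_sum_prependC_linkC hlen γ
    · intro χ hχ
      by_contra hmem
      exact hχ (by simp only [hzero χ hmem, map_zero])

end
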